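/- arXiv:1810.02032 — 2 statements merged into one kernel-verified Lean document; each statement's English description precedes it below -/
import Mathlib

section
/- Let t ↦ W(t) = (W_L(t),…,W_1(t)) be a gradient flow of the empirical risk R of a deep linear network. Then for every 1 ≤ k < L and every t ≥ 0, W_{k+1}(t)ᵀW_{k+1}(t) − W_{k+1}(0)ᵀW_{k+1}(0) = W_k(t)W_k(t)ᵀ − W_k(0)W_k(0)ᵀ; consequently, ‖W_{k+1}(t)‖_F² − ‖W_{k+1}(0)‖_F² = ‖W_k(t)‖_F² − ‖W_k(0)‖_F², i.e., the difference of squared Frobenius norms of any two layers is constant in t. -/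
/-!
Each gradient factors as `Gⱼ = (W_L ⋯ W_{j+1})ᵀ (∇R)ᵀ (W_{j-1} ⋯ W_1)ᵀ`, so adjacent layers satisfy
the balancing identity `W_{k+1}ᵀ G_{k+1} = G_k W_kᵀ` (`layer_balance`): both sides are
`(W_L ⋯ W_{k+1})ᵀ (∇R)ᵀ (W_k ⋯ W_1)ᵀ`. Along the flow, the derivative of
`W_{k+1}ᵀ W_{k+1} - W_k W_kᵀ` is `-(W_{k+1}ᵀ G_{k+1} + G_{k+1}ᵀ W_{k+1}) + (G_k W_kᵀ + W_k G_kᵀ)`,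
which therefore vanishes, and a function on `[0, ∞)` with zero derivative is constant.
The statement about Frobenius norms is the trace of this conservation law.
-/

open Matrix Filter
open scoped BigOperators

noncomputable section

/-- Euclidean norm of a vector in `ℝ^m`. -/
def vecNorm {m : Type*} [Fintype m] (v : m → ℝ) : ℝ :=
  Real.sqrt (∑ i, (v i) ^ 2)

/-- Frobenius norm of a real matrix. -/
def frobNorm {m n : Type*} [Fintype m] [Fintype n] (M : Matrix m n ℝ) : ℝ :=
  Real.sqrt (∑ i, ∑ j, (M i j) ^ 2)

/-- Spectral norm (operator 2-norm) of a real matrix. -/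
def specNorm {m n : Type*} [Fintype m] [Fintype n] (M : Matrix m n ℝ) : ℝ :=
  sSup {c : ℝ | ∃ v : n → ℝ, vecNorm v = 1 ∧ c = vecNorm (M.mulVec v)}

/-- `(u, v)` is a top singular vector pair of `M`: both are unit vectors,
`M v = ‖M‖₂ u` and `Mᵀ u = ‖M‖₂ v`. -/
def IsTopSingularPair {m n : Type*} [Fintype m] [Fintype n]
    (M : Matrix m n ℝ) (u : m → ℝ) (v : n → ℝ) : Prop :=
  vecNorm u = 1 ∧ vecNorm v = 1 ∧
    M.mulVec v = specNorm M • u ∧ Mᵀ.mulVec u = specNorm M • v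

/-- Parameters of a deep linear network: layer `k` (0-indexed; paper layer `k+1`)
is a matrix mapping `ℝ^{dim k}` to `ℝ^{dim (k+1)}`. -/
abbrev Layers (dim : ℕ → ℕ) := ∀ j : ℕ, Matrix (Fin (dim (j+1))) (Fin (dim j)) ℝ

/-- Product `W_{j-1} ⋯ W_0` of the bottom `j` layers (paper: `W_j ⋯ W_1`). -/
def prodUpTo {dim : ℕ → ℕ} (W : Layers dim) : ∀ j : ℕ, Matrix (Fin (dim j)) (Fin (dim 0)) ℝ
  | 0 => 1
  | (j+1) => W j * prodUpTo W j

/-- Product `W_{L-1} ⋯ W_j` of the layers from `j` up to the top layer `L-1`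
(paper: `W_L ⋯ W_{j+1}`); for `j ≥ L` it is a pseudo-identity. -/
def prodFrom {dim : ℕ → ℕ} (L : ℕ) (W : Layers dim) (j : ℕ) :
    Matrix (Fin (dim L)) (Fin (dim j)) ℝ :=
  if h : j < L then prodFrom L W (j+1) * W j
  else Matrix.of fun i j' => if (i : ℕ) = (j' : ℕ) then 1 else 0
  termination_by L - j
  decreasing_by omega

/-- The linear predictor `w_prod = (W_L ⋯ W_1)ᵀ ∈ ℝ^d` induced by the network
(recall `dim L = 1`). -/
def wprod {dim : ℕ → ℕ} (L : ℕ) (W : Layers dim) : Fin (dim 0) → ℝ :=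
  fun j => ∑ a, prodUpTo W L a j

/-- Empirical risk of a linear predictor `w`: `R(w) = (1/n) ∑ᵢ ℓ(⟨w, zᵢ⟩)`. -/
def riskV {n d : ℕ} (ℓ : ℝ → ℝ) (z : Fin n → Fin d → ℝ) (w : Fin d → ℝ) : ℝ :=
  (n : ℝ)⁻¹ * ∑ i, ℓ (w ⬝ᵥ z i)

/-- Gradient of the risk w.r.t. the linear predictor: `∇R(w) = (1/n) ∑ᵢ ℓ'(⟨w, zᵢ⟩) zᵢ`. -/
def gradRiskV {n d : ℕ} (ℓ' : ℝ → ℝ) (z : Fin n → Fin d → ℝ) (w : Fin d → ℝ) :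
    Fin d → ℝ :=
  (n : ℝ)⁻¹ • ∑ i, ℓ' (w ⬝ᵥ z i) • z i

/-- The partial gradient of the empirical risk with respect to layer `k`:
`∂R/∂W_k = (W_L ⋯ W_{k+1})ᵀ ∇R(w_prod)ᵀ (W_{k-1} ⋯ W_1)ᵀ`. -/
def gradLayer {dim : ℕ → ℕ} (L : ℕ) (ℓ' : ℝ → ℝ) {n : ℕ}
    (z : Fin n → Fin (dim 0) → ℝ) (W : Layers dim) (k : ℕ) :
    Matrix (Fin (dim (k+1))) (Fin (dim k)) ℝ :=
  (prodFrom L W (k+1))ᵀ *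
    (Matrix.of fun (_ : Fin (dim L)) (j : Fin (dim 0)) => gradRiskV ℓ' z (wprod L W) j) *
    (prodUpTo W k)ᵀ

/-- Empirical risk of the network. -/
def riskW {dim : ℕ → ℕ} (L : ℕ) (ℓ : ℝ → ℝ) {n : ℕ}
    (z : Fin n → Fin (dim 0) → ℝ) (W : Layers dim) : ℝ :=
  riskV ℓ z (wprod L W)

/-- Gradient flow: `dW(t)/dt = −∇R(W(t))` for all `t ≥ 0`, entrywise on each layer. -/
def IsGradientFlow {dim : ℕ → ℕ} (L : ℕ) (ℓ' : ℝ → ℝ) {n : ℕ}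
    (z : Fin n → Fin (dim 0) → ℝ) (W : ℝ → Layers dim) : Prop :=
  ∀ t : ℝ, 0 ≤ t → ∀ k < L, ∀ i j,
    HasDerivAt (fun s => W s k i j) (-(gradLayer L ℓ' z (W t) k i j)) t

/-- The initialization-dependent constant `D`. -/
def Dconst {dim : ℕ → ℕ} (L : ℕ) (W0 : Layers dim) : ℝ :=
  (⨆ k : Fin L, frobNorm (W0 k) ^ 2) - frobNorm (W0 (L-1)) ^ 2
    + ∑ k ∈ Finset.range (L-1),
        specNorm (W0 k * (W0 k)ᵀ - (W0 (k+1))ᵀ * W0 (k+1))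

/-- Euclidean norm of a parameter tuple (all entries of the first `L` layers concatenated). -/
def paramNorm {dim : ℕ → ℕ} (L : ℕ) (V : Layers dim) : ℝ :=
  Real.sqrt (∑ k ∈ Finset.range L, frobNorm (V k) ^ 2)

/-- Squared Euclidean norm of the full gradient `∇R(W)`. -/
def gradNormSq {dim : ℕ → ℕ} (L : ℕ) (ℓ' : ℝ → ℝ) {n : ℕ}
    (z : Fin n → Fin (dim 0) → ℝ) (W : Layers dim) : ℝ :=
  ∑ k ∈ Finset.range L, frobNorm (gradLayer L ℓ' z W k) ^ 2

/-- The data-dependent constant `α = min_{‖ξ‖=1, ξ ⟂ ū} max_{i ∈ S} ⟨ξ, zᵢ⟩`,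
where `S` is the set of support vectors. -/
def alphaConst {n d : ℕ} (z : Fin n → Fin d → ℝ) (ubar : Fin d → ℝ) (γ : ℝ) : ℝ :=
  sInf {c : ℝ | ∃ ξ : Fin d → ℝ, vecNorm ξ = 1 ∧ ξ ⬝ᵥ ubar = 0 ∧
    c = sSup {r : ℝ | ∃ i : Fin n, ubar ⬝ᵥ z i = γ ∧ r = ξ ⬝ᵥ z i}}

/-- Orthogonal projection onto the orthogonal complement of `span(ū)` (for `ū` a unit vector). -/
def projPerp {d : ℕ} (ubar : Fin d → ℝ) (w : Fin d → ℝ) : Fin d → ℝ :=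
  w - (w ⬝ᵥ ubar) • ubar

/-- The balancing identity between the gradients of adjacent layers. -/
lemma layer_balance {dim : ℕ → ℕ} {L n : ℕ} (ℓ' : ℝ → ℝ)
    (z : Fin n → Fin (dim 0) → ℝ) (W : Layers dim) {k : ℕ} (hk : k + 1 < L) :
    (W (k+1))ᵀ * gradLayer L ℓ' z W (k+1) = gradLayer L ℓ' z W k * (W k)ᵀ := by
  have hF : prodFrom L W (k+1) = prodFrom L W (k+1+1) * W (k+1) := by
    rw [prodFrom, dif_pos hk]
  simp only [gradLayer]
  rw [hF, prodUpTo, Matrix.transpose_mul, Matrix.transpose_mul]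
  simp only [Matrix.mul_assoc]

lemma frobNorm_sq {m n : Type*} [Fintype m] [Fintype n] (M : Matrix m n ℝ) :
    frobNorm M ^ 2 = ∑ i, ∑ j, (M i j) ^ 2 :=
  Real.sq_sqrt (by positivity)

lemma frobNorm_sq_eq_trace_mul_transpose {m n : Type*} [Fintype m] [Fintype n]
    (M : Matrix m n ℝ) : frobNorm M ^ 2 = (M * Mᵀ).trace := by
  rw [frobNorm_sq]
  simp [Matrix.trace, Matrix.mul_apply, sq]

lemma frobNorm_sq_eq_trace_transpose_mul {m n : Type*} [Fintype m] [Fintype n]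
    (M : Matrix m n ℝ) : frobNorm M ^ 2 = (Mᵀ * M).trace := by
  rw [frobNorm_sq_eq_trace_mul_transpose, Matrix.trace_mul_comm]

theorem stmt0
    (dim : ℕ → ℕ) (L n : ℕ) (hL : 1 ≤ L) (hdimL : dim L = 1) (hn : 0 < n)
    (x : Fin n → Fin (dim 0) → ℝ) (y : Fin n → ℝ) (z : Fin n → Fin (dim 0) → ℝ)
    (hx : ∀ i, vecNorm (x i) ≤ 1) (hy : ∀ i, y i = 1 ∨ y i = -1)
    (hz : ∀ i, z i = y i • x i)
    (ℓ ℓ' : ℝ → ℝ) (hderiv : ∀ s : ℝ, HasDerivAt ℓ (ℓ' s) s) (hcont : Continuous ℓ')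
    (W : ℝ → Layers dim) (hflow : IsGradientFlow L ℓ' z W)
    :
    ∀ k : ℕ, k + 1 < L → ∀ t : ℝ, 0 ≤ t →
      ((W t (k+1))ᵀ * W t (k+1) - (W 0 (k+1))ᵀ * W 0 (k+1)
          = W t k * (W t k)ᵀ - W 0 k * (W 0 k)ᵀ)
      ∧ frobNorm (W t (k+1)) ^ 2 - frobNorm (W 0 (k+1)) ^ 2
          = frobNorm (W t k) ^ 2 - frobNorm (W 0 k) ^ 2 := by
  intro k hk t ht
  have key : (W t (k+1))ᵀ * W t (k+1) - (W 0 (k+1))ᵀ * W 0 (k+1)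
      = W t k * (W t k)ᵀ - W 0 k * (W 0 k)ᵀ := by
    ext a b
    let f : ℝ → ℝ := fun s => ∑ i, W s (k+1) i a * W s (k+1) i b - ∑ j, W s k a j * W s k b j
    have hd : ∀ s, 0 ≤ s → HasDerivAt f 0 s := by
      intro s hs
      have h₁ := HasDerivAt.fun_sum (u := Finset.univ) fun i _ =>
        (hflow s hs (k+1) hk i a).mul (hflow s hs (k+1) hk i b)
      have h₂ := HasDerivAt.fun_sum (u := Finset.univ) fun j _ =>
        (hflow s hs k (by omega) a j).mul (hflow s hs k (by omega) b j)
      refine (h₁.sub h₂).congr_deriv ?_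
      -- The derivative of the symmetric difference uses the identity at `(a, b)` and at `(b, a)`.
      have e₁ := congrFun (congrFun (layer_balance ℓ' z (W s) hk) a) b
      have e₂ := congrFun (congrFun (layer_balance ℓ' z (W s) hk) b) a
      simp only [Matrix.mul_apply, Matrix.transpose_apply] at e₁ e₂
      simp only [Finset.sum_add_distrib, neg_mul, mul_neg, Finset.sum_neg_distrib]
      have e₃ : ∑ i, gradLayer L ℓ' z (W s) (k+1) i a * W s (k+1) i b
          = ∑ i, W s (k+1) i b * gradLayer L ℓ' z (W s) (k+1) i a :=
        Finset.sum_congr rfl fun _ _ => mul_comm _ _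
      have e₄ : ∑ j, W s k a j * gradLayer L ℓ' z (W s) k b j
          = ∑ j, gradLayer L ℓ' z (W s) k b j * W s k a j :=
        Finset.sum_congr rfl fun _ _ => mul_comm _ _
      rw [e₃, e₄, e₁, e₂]
      ring
    have hconst : f t = f 0 :=
      constant_of_has_deriv_right_zero
        (fun s hs => (hd s hs.1).continuousAt.continuousWithinAt)
        (fun s hs => (hd s hs.1).hasDerivWithinAt) t ⟨ht, le_rfl⟩
    simp only [Matrix.sub_apply, Matrix.mul_apply, Matrix.transpose_apply]
    simp only [f] at hconst
    linarith
  refine ⟨key, ?_⟩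
  have htr := congrArg Matrix.trace key
  simpa only [Matrix.trace_sub, ← frobNorm_sq_eq_trace_mul_transpose,
    ← frobNorm_sq_eq_trace_transpose_mul] using htr

end
end

section
/- Under Assumptions 1 and 2, any gradient flow of the empirical risk of a deep linear network on linearly separable data satisfies lim_{t→∞} R(W(t)) = 0, and for every layer 1 ≤ k ≤ L, lim_{t→∞} ‖W_k(t)‖_F = ∞. -/
/-!
The argument needs no alignment between layers; it rests on monotone quantities only.

Write `R(t)` for the risk, `w` for the linear predictor, `q(t) = ‖W₀‖²` and `g(t)² = ‖∂R/∂W₀‖²`.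

* Dissipation (`hasDerivAt_riskW`): `R' = -∑ₖ ‖∂R/∂Wₖ‖² ≤ -g²`. As the initial gradient does not
  vanish, `R` drops strictly below `ℓ 0` and stays there, so `‖w‖` is bounded below.
* Suppose `R` stays above some `ε > 0`. Then some margin is bounded above while all margins are
  bounded below, so separability bounds `‖∇R(w)‖` below (`exists_gradRiskV_lower_bound`). Since
  `w = v W₀` and `∂R/∂W₀ = vᵀ ∇R(w)` for the same row vector `v`, this gives `g² q ≥ a²` for a
  constant `a > 0` (`gradLayer_zero_mul_ge`).
* By Cauchy–Schwarz `|q'| ≤ 2 g √q ≤ (2/a) g² q`, so `q · exp ((2/a) R)` is nonincreasing and `q` is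
  bounded. Hence `g²` is bounded below and `R → -∞`, contradicting `R ≥ 0`
  (`false_of_dissipation`). Thus `R → 0`.
* If `R → 0`, every margin diverges, hence so does `‖w‖ ≤ C ∏ₖ ‖Wₖ‖`. The differences
  `‖Wⱼ‖² - ‖Wₖ‖²` are conserved by the flow, since `⟨Wₖ, ∂R/∂Wₖ⟩ = ⟨w, ∇R(w)⟩` for every `k`
  (`ip_layer_grad`). So every layer diverges.
-/

open Matrix Filter
open scoped BigOperators

noncomputable section

/-! ### The Frobenius inner product -/

/-- Frobenius inner product of two real matrices. -/
def ip {m n : Type*} [Fintype m] [Fintype n] (A B : Matrix m n ℝ) : ℝ :=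
  ∑ i, ∑ j, A i j * B i j

/-- Squared Frobenius norm. -/
def fsq {m n : Type*} [Fintype m] [Fintype n] (A : Matrix m n ℝ) : ℝ :=
  ∑ i, ∑ j, (A i j) ^ 2

section FrobeniusInnerProduct

variable {m n p q : Type*} [Fintype m] [Fintype n] [Fintype p] [Fintype q]

lemma ip_eq_trace (A B : Matrix m n ℝ) : ip A B = trace (Aᵀ * B) := by
  unfold ip
  rw [Finset.sum_comm]
  simp [trace, Matrix.mul_apply]

lemma ip_self (A : Matrix m n ℝ) : ip A A = fsq A := by
  simp [ip, fsq, sq]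

lemma ip_neg (A B : Matrix m n ℝ) : ip A (-B) = -ip A B := by
  simp [ip]

lemma fsq_nonneg (A : Matrix m n ℝ) : 0 ≤ fsq A := by
  unfold fsq; positivity

/-- Left and right multiplication are adjoint to multiplication by the transposes. -/
lemma ip_adjoint (F : Matrix p m ℝ) (A : Matrix m n ℝ) (P : Matrix n q ℝ) (G : Matrix p q ℝ) :
    ip A (Fᵀ * G * Pᵀ) = ip (F * A * P) G := by
  rw [ip_eq_trace, ip_eq_trace, Matrix.transpose_mul, Matrix.transpose_mul,
    ← Matrix.mul_assoc, ← Matrix.mul_assoc, Matrix.trace_mul_comm]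
  simp [Matrix.mul_assoc]

lemma ip_comm (A B : Matrix m n ℝ) : ip A B = ip B A := by
  simp [ip, mul_comm]

lemma ip_sum_left {ι : Type*} (s : Finset ι) (A : ι → Matrix m n ℝ) (B : Matrix m n ℝ) :
    ip (∑ k ∈ s, A k) B = ∑ k ∈ s, ip (A k) B := by
  simp only [ip_eq_trace, Matrix.transpose_sum, Matrix.sum_mul, Matrix.trace_sum]

lemma ip_sq_le (A B : Matrix m n ℝ) : ip A B ^ 2 ≤ fsq A * fsq B := by
  unfold ip fsq
  simp only [← Fintype.sum_prod_type']
  exact Finset.sum_mul_sq_le_sq_mul_sq _ _ _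

lemma fsq_mul_le (A : Matrix m n ℝ) (B : Matrix n p ℝ) : fsq (A * B) ≤ fsq A * fsq B := by
  have h : fsq A * fsq B = ∑ i, ∑ j, (∑ k, A i k ^ 2) * (∑ k, B k j ^ 2) := by
    unfold fsq
    rw [Finset.sum_comm (f := fun i j => B i j ^ 2), Finset.sum_mul_sum]
  rw [h]
  unfold fsq
  gcongr with i _ j _
  rw [Matrix.mul_apply]
  exact Finset.sum_mul_sq_le_sq_mul_sq _ _ _

lemma fsq_transpose_mul_of_unique [Unique p] (A : Matrix p m ℝ) (B : Matrix p n ℝ) :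
    fsq (Aᵀ * B) = fsq A * fsq B := by
  simp [fsq, Matrix.mul_apply, mul_pow, Finset.sum_mul_sum]

lemma frobNorm_eq (A : Matrix m n ℝ) : frobNorm A = √(fsq A) := rfl

end FrobeniusInnerProduct

/-! ### Layer products and their derivatives -/

section Network

variable {dim : ℕ → ℕ}

lemma prodFrom_of_lt {L : ℕ} (W : Layers dim) {j : ℕ} (h : j < L) :
    prodFrom L W j = prodFrom L W (j+1) * W j := by
  rw [prodFrom, dif_pos h]

lemma prodFrom_self (L : ℕ) (W : Layers dim) : prodFrom L W L = 1 := by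
  rw [prodFrom, dif_neg (lt_irrefl _)]
  ext i j
  simp [Matrix.one_apply, Fin.ext_iff]

lemma prodFrom_mul_prodUpTo {L : ℕ} (W : Layers dim) {j : ℕ} (h : j ≤ L) :
    prodFrom L W j * prodUpTo W j = prodUpTo W L := by
  induction h using Nat.decreasingInduction with
  | self => rw [prodFrom_self, Matrix.one_mul]
  | of_succ k hk ih => rw [prodFrom_of_lt W hk, Matrix.mul_assoc]; exact ih

lemma prodFrom_mul_layer_mul_prodUpTo {L : ℕ} (W : Layers dim) {k : ℕ} (h : k < L) :
    prodFrom L W (k+1) * W k * prodUpTo W k = prodUpTo W L := by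
  rw [← prodFrom_of_lt W h, prodFrom_mul_prodUpTo W h.le]

/-- The derivative of `prodUpTo W j` in the direction `V`, by the product rule. -/
def dprod (W V : Layers dim) : ∀ j : ℕ, Matrix (Fin (dim j)) (Fin (dim 0)) ℝ
  | 0 => 0
  | (j+1) => V j * prodUpTo W j + W j * dprod W V j

lemma prodFrom_mul_dprod {L : ℕ} (W V : Layers dim) {j : ℕ} (h : j ≤ L) :
    prodFrom L W j * dprod W V j
      = ∑ k ∈ Finset.range j, prodFrom L W (k+1) * V k * prodUpTo W k := by
  induction j with
  | zero => simp [dprod]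
  | succ j ih =>
    rw [Finset.sum_range_succ, ← ih (by omega), dprod, Matrix.mul_add,
      prodFrom_of_lt W (show j < L by omega)]
    simp only [Matrix.mul_assoc]
    rw [add_comm]

lemma hasDerivAt_prodUpTo {L : ℕ} {W : ℝ → Layers dim} {V : Layers dim} {t : ℝ}
    (hW : ∀ k < L, ∀ i j, HasDerivAt (fun s => W s k i j) (V k i j) t) {j : ℕ} (h : j ≤ L) :
    ∀ a b, HasDerivAt (fun s => prodUpTo (W s) j a b) (dprod (W t) V j a b) t := by
  induction j with
  | zero =>
    intro a b
    simpa [prodUpTo, dprod] using hasDerivAt_const t ((1 : Matrix _ _ ℝ) a b)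
  | succ j ih =>
    intro a b
    simp only [prodUpTo, dprod, Matrix.mul_apply, Matrix.add_apply, ← Finset.sum_add_distrib]
    exact HasDerivAt.fun_sum fun c _ => (hW j (by omega) a c).mul (ih (by omega) c b)

/-- The gradient of the risk at the linear predictor, as a matrix of the shape of the product
`W_{L-1} ⋯ W_0`. -/
abbrev gradMat (L : ℕ) (ℓ' : ℝ → ℝ) {n : ℕ} (z : Fin n → Fin (dim 0) → ℝ) (W : Layers dim) :
    Matrix (Fin (dim L)) (Fin (dim 0)) ℝ :=
  Matrix.of fun (_ : Fin (dim L)) (j : Fin (dim 0)) => gradRiskV ℓ' z (wprod L W) j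

/-- The inner product of a layer with its gradient is the same for all layers; this is what makes
differences of squared layer norms conserved quantities. -/
lemma ip_layer_grad {L : ℕ} (ℓ' : ℝ → ℝ) {n : ℕ} (z : Fin n → Fin (dim 0) → ℝ) (W : Layers dim)
    {k : ℕ} (hk : k < L) :
    ip (W k) (gradLayer L ℓ' z W k) = ip (prodUpTo W L) (gradMat L ℓ' z W) := by
  rw [gradLayer, ip_adjoint, prodFrom_mul_layer_mul_prodUpTo W hk]

/-- Along the flow the risk decreases at the rate of the squared gradient norm. -/
lemma hasDerivAt_riskW {L n : ℕ} {ℓ ℓ' : ℝ → ℝ} (hderiv : ∀ s : ℝ, HasDerivAt ℓ (ℓ' s) s)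
    {z : Fin n → Fin (dim 0) → ℝ} {W : ℝ → Layers dim} (hflow : IsGradientFlow L ℓ' z W)
    {t : ℝ} (ht : 0 ≤ t) :
    HasDerivAt (fun s => riskW L ℓ z (W s))
      (-∑ k ∈ Finset.range L, fsq (gradLayer L ℓ' z (W t) k)) t := by
  set V : Layers dim := fun k => -gradLayer L ℓ' z (W t) k with hV
  have hP := hasDerivAt_prodUpTo (W := W) (V := V) (t := t) (L := L)
    (fun k hk i j => hflow t ht k hk i j) le_rfl
  set D := dprod (W t) V L with hD
  have hw : ∀ j, HasDerivAt (fun s => wprod L (W s) j) (∑ a, D a j) t := fun j =>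
    HasDerivAt.fun_sum fun a _ => hP a j
  have hdot : ∀ i, HasDerivAt (fun s => wprod L (W s) ⬝ᵥ z i) (∑ j, (∑ a, D a j) * z i j) t :=
    fun i => HasDerivAt.fun_sum fun j _ => (hw j).mul_const _
  have hR : HasDerivAt (fun s => riskW L ℓ z (W s))
      ((n : ℝ)⁻¹ * ∑ i, ℓ' (wprod L (W t) ⬝ᵥ z i) * ∑ j, (∑ a, D a j) * z i j) t :=
    (HasDerivAt.fun_sum fun i _ =>
      (hderiv (wprod L (W t) ⬝ᵥ z i)).comp t (hdot i)).const_mul _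
  have hDsum : D = ∑ k ∈ Finset.range L, prodFrom L (W t) (k+1) * V k * prodUpTo (W t) k := by
    rw [← prodFrom_mul_dprod (W t) V le_rfl, prodFrom_self, Matrix.one_mul]
  have h1 : (n : ℝ)⁻¹ * ∑ i, ℓ' (wprod L (W t) ⬝ᵥ z i) * ∑ j, (∑ a, D a j) * z i j
      = ip D (gradMat L ℓ' z (W t)) := by
    unfold ip
    rw [Finset.sum_comm]
    simp only [gradMat, Matrix.of_apply, gradRiskV, Pi.smul_apply, Finset.sum_apply, smul_eq_mul,
      ← Finset.sum_mul]
    simp only [Finset.mul_sum]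
    rw [Finset.sum_comm]
    refine Finset.sum_congr rfl fun j _ => Finset.sum_congr rfl fun i _ => ?_
    ring
  have h2 : ip D (gradMat L ℓ' z (W t))
      = -∑ k ∈ Finset.range L, fsq (gradLayer L ℓ' z (W t) k) := by
    rw [hDsum, ip_sum_left, ← Finset.sum_neg_distrib]
    refine Finset.sum_congr rfl fun k _ => ?_
    rw [← ip_adjoint]
    change ip (V k) (gradLayer L ℓ' z (W t) k) = _
    rw [ip_comm, hV, ip_neg, ip_self]
  rw [← h2, ← h1]
  exact hR

lemma hasDerivAt_fsq {L n : ℕ} {ℓ' : ℝ → ℝ}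
    {z : Fin n → Fin (dim 0) → ℝ} {W : ℝ → Layers dim} (hflow : IsGradientFlow L ℓ' z W)
    {t : ℝ} (ht : 0 ≤ t) {k : ℕ} (hk : k < L) :
    HasDerivAt (fun s => fsq (W s k)) (-2 * ip (W t k) (gradLayer L ℓ' z (W t) k)) t := by
  have h : HasDerivAt (fun s => fsq (W s k))
      (∑ i, ∑ j, 2 * W t k i j * -(gradLayer L ℓ' z (W t) k i j)) t := by
    refine HasDerivAt.fun_sum fun i _ => HasDerivAt.fun_sum fun j _ => ?_
    simpa using (hflow t ht k hk i j).fun_pow 2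
  convert h using 1
  simp only [ip, Finset.mul_sum]
  refine Finset.sum_congr rfl fun i _ => Finset.sum_congr rfl fun j _ => ?_
  ring

lemma antitoneOn_Ici_of_hasDerivAt {f f' : ℝ → ℝ} {a : ℝ}
    (h : ∀ t, a ≤ t → HasDerivAt f (f' t) t) (h' : ∀ t, a ≤ t → f' t ≤ 0) :
    AntitoneOn f (Set.Ici a) := by
  refine antitoneOn_of_deriv_nonpos (convex_Ici a)
    (fun t ht => (h t ht).continuousAt.continuousWithinAt)
    (fun t ht => (h t (interior_subset ht)).differentiableAt.differentiableWithinAt)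
    (fun t ht => ?_)
  rw [(h t (interior_subset ht)).deriv]
  exact h' t (interior_subset ht)

lemma fsq_sub_le {L n : ℕ} {ℓ' : ℝ → ℝ}
    {z : Fin n → Fin (dim 0) → ℝ} {W : ℝ → Layers dim} (hflow : IsGradientFlow L ℓ' z W)
    {t : ℝ} (ht : 0 ≤ t) {j k : ℕ} (hj : j < L) (hk : k < L) :
    fsq (W t j) - fsq (W t k) ≤ fsq (W 0 j) - fsq (W 0 k) := by
  have := antitoneOn_Ici_of_hasDerivAt (a := 0) (f' := fun _ => 0)
    (f := fun s => fsq (W s j) - fsq (W s k)) (fun s hs => by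
      refine ((hasDerivAt_fsq hflow hs hj).sub (hasDerivAt_fsq hflow hs hk)).congr_deriv ?_
      rw [ip_layer_grad _ _ _ hj, ip_layer_grad _ _ _ hk, sub_self]) (fun _ _ => le_rfl)
  exact this Set.self_mem_Ici ht ht

lemma fsq_prodUpTo_le (W : Layers dim) (j : ℕ) :
    fsq (prodUpTo W j) ≤ fsq (1 : Matrix (Fin (dim 0)) (Fin (dim 0)) ℝ)
      * ∏ k ∈ Finset.range j, fsq (W k) := by
  induction j with
  | zero => simp [prodUpTo]
  | succ j ih =>
    rw [Finset.prod_range_succ, prodUpTo]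
    calc _ ≤ fsq (W j) * fsq (prodUpTo W j) := fsq_mul_le _ _
      _ ≤ fsq (W j) * _ := mul_le_mul_of_nonneg_left ih (fsq_nonneg _)
      _ = _ := by ring

lemma sum_sq_wprod {L : ℕ} (hdimL : dim L = 1) (W : Layers dim) :
    ∑ j, wprod L W j ^ 2 = fsq (prodUpTo W L) := by
  have : Unique (Fin (dim L)) := by rw [hdimL]; infer_instance
  simp [wprod, fsq]

/-- A margin attained on data in the unit ball is bounded by the norm of the predictor. -/
lemma margin_sq_le {L : ℕ} (hdimL : dim L = 1) (W : Layers dim) {v : Fin (dim 0) → ℝ}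
    (hv : ∑ j, v j ^ 2 ≤ 1) : (wprod L W ⬝ᵥ v) ^ 2 ≤ fsq (prodUpTo W L) := by
  rw [← sum_sq_wprod hdimL]
  calc (wprod L W ⬝ᵥ v) ^ 2 ≤ (∑ j, wprod L W j ^ 2) * ∑ j, v j ^ 2 :=
        Finset.sum_mul_sq_le_sq_mul_sq _ _ _
    _ ≤ (∑ j, wprod L W j ^ 2) * 1 := by gcongr
    _ = _ := mul_one _

/-- The row vector `W_{L-1} ⋯ W_1` is common to the predictor and to the bottom-layer gradient, so
lower bounds for the predictor and for `∇R` bound the product of the norms of the bottom-layer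
gradient and of the bottom layer. -/
lemma gradLayer_zero_mul_ge {L n : ℕ} (hL : 0 < L) (hdimL : dim L = 1) (ℓ' : ℝ → ℝ)
    (z : Fin n → Fin (dim 0) → ℝ) (W : Layers dim) {c s : ℝ}
    (hc : c ≤ ∑ j, gradRiskV ℓ' z (wprod L W) j ^ 2) (hs : s ≤ fsq (prodUpTo W L))
    (hs0 : 0 ≤ s) :
    c * s ≤ fsq (gradLayer L ℓ' z W 0) * fsq (W 0) := by
  have : Unique (Fin (dim L)) := by rw [hdimL]; infer_instance
  have h1 : fsq (gradLayer L ℓ' z W 0)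
      = fsq (prodFrom L W 1) * ∑ j, gradRiskV ℓ' z (wprod L W) j ^ 2 := by
    rw [gradLayer, prodUpTo, Matrix.transpose_one, Matrix.mul_one, fsq_transpose_mul_of_unique]
    simp [fsq]
  have h2 : fsq (prodUpTo W L) ≤ fsq (prodFrom L W 1) * fsq (W 0) := by
    rw [← prodFrom_mul_layer_mul_prodUpTo W hL, prodUpTo, Matrix.mul_one]
    exact fsq_mul_le _ _
  rw [h1]
  calc c * s ≤ (∑ j, gradRiskV ℓ' z (wprod L W) j ^ 2) * fsq (prodUpTo W L) :=
        mul_le_mul hc hs hs0 (by positivity)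
    _ ≤ (∑ j, gradRiskV ℓ' z (wprod L W) j ^ 2) * (fsq (prodFrom L W 1) * fsq (W 0)) := by
        gcongr
    _ = _ := by ring

end Network

/-! ### The loss and the risk of a linear predictor -/

lemma loss_strictAnti {ℓ ℓ' : ℝ → ℝ} (hderiv : ∀ s : ℝ, HasDerivAt ℓ (ℓ' s) s)
    (hneg : ∀ s : ℝ, ℓ' s < 0) : StrictAnti ℓ :=
  strictAnti_of_deriv_neg fun s => by rw [(hderiv s).deriv]; exact hneg s

lemma loss_pos {ℓ : ℝ → ℝ} (hanti : StrictAnti ℓ) (htop : Tendsto ℓ atTop (nhds 0)) (s : ℝ) :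
    0 < ℓ s :=
  (hanti.antitone.le_of_tendsto htop (s + 1)).trans_lt (hanti (lt_add_one s))

section Risk

variable {n d : ℕ} {ℓ ℓ' : ℝ → ℝ} {z : Fin n → Fin d → ℝ} {w : Fin d → ℝ}

lemma loss_le_mul_riskV (hn : 0 < n) (hpos : ∀ s, 0 < ℓ s) (i : Fin n) :
    ℓ (w ⬝ᵥ z i) ≤ n * riskV ℓ z w := by
  have : (n : ℝ) ≠ 0 := by positivity
  rw [riskV, mul_inv_cancel_left₀ this]
  exact Finset.single_le_sum (f := fun i => ℓ (w ⬝ᵥ z i)) (fun i _ => (hpos _).le)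
    (Finset.mem_univ i)

lemma exists_loss_le_of_riskV_le (hn : 0 < n) {r : ℝ} (h : riskV ℓ z w ≤ r) :
    ∃ i, ℓ (w ⬝ᵥ z i) ≤ r := by
  have hn' : (0 : ℝ) < n := by positivity
  by_contra! hcon
  have : Nonempty (Fin n) := ⟨⟨0, hn⟩⟩
  have := Finset.sum_lt_sum_of_nonempty Finset.univ_nonempty fun i (_ : i ∈ Finset.univ) => hcon i
  rw [riskV, inv_mul_le_iff₀ hn'] at h
  simp at this
  linarith

lemma exists_le_loss_of_le_riskV (hn : 0 < n) {r : ℝ} (h : r ≤ riskV ℓ z w) :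
    ∃ i, r ≤ ℓ (w ⬝ᵥ z i) := by
  have hn' : (0 : ℝ) < n := by positivity
  by_contra! hcon
  have : Nonempty (Fin n) := ⟨⟨0, hn⟩⟩
  have := Finset.sum_lt_sum_of_nonempty Finset.univ_nonempty fun i (_ : i ∈ Finset.univ) => hcon i
  rw [riskV, le_inv_mul_iff₀ hn'] at h
  simp at this
  linarith

/-- On separable data `∇R` is bounded away from zero where the risk is bounded and bounded away
from zero: some margin then lies in a fixed compact interval, on which `-ℓ'` has a positive minimum,
and every data point contributes with the same sign in the separating direction. -/
lemma exists_gradRiskV_lower_bound (hn : 0 < n) {u : Fin d → ℝ} (hu : ∑ j, u j ^ 2 = 1)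
    (hsep : ∀ i, 0 < u ⬝ᵥ z i) (hcont : Continuous ℓ') (hneg : ∀ s : ℝ, ℓ' s < 0)
    (hanti : StrictAnti ℓ) (hpos : ∀ s, 0 < ℓ s)
    (hbot : Tendsto ℓ atBot atTop) (htop : Tendsto ℓ atTop (nhds 0))
    {ε B : ℝ} (hε : 0 < ε) :
    ∃ c > 0, ∀ w : Fin d → ℝ, ε ≤ riskV ℓ z w → riskV ℓ z w ≤ B →
      c ≤ ∑ j, gradRiskV ℓ' z w j ^ 2 := by
  have : Nonempty (Fin n) := ⟨⟨0, hn⟩⟩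
  have hn' : (0 : ℝ) < n := by positivity
  obtain ⟨b, hb⟩ := (htop.eventually (gt_mem_nhds hε)).exists
  obtain ⟨a, ha⟩ := (hbot.eventually (eventually_gt_atTop (n * B))).exists
  obtain ⟨i₀, hi₀⟩ := Finite.exists_min fun i => u ⬝ᵥ z i
  -- Enlarging the interval to contain `a` guarantees that it is nonempty.
  obtain ⟨s₀, -, hs₀⟩ := (isCompact_Icc (a := a) (b := max a b)).exists_isMaxOn
    ⟨a, by simp⟩ hcont.continuousOn
  have hm : 0 < -ℓ' s₀ := by linarith [hneg s₀]
  have hγ := hsep i₀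
  refine ⟨((n : ℝ)⁻¹ * (-ℓ' s₀ * (u ⬝ᵥ z i₀))) ^ 2, by positivity, fun w h1 h2 => ?_⟩
  obtain ⟨i, hi⟩ := exists_le_loss_of_le_riskV hn h1
  have hib : w ⬝ᵥ z i ≤ b := by
    by_contra! hcon
    linarith [hanti hcon]
  have hia : a ≤ w ⬝ᵥ z i := by
    by_contra! hcon
    have := loss_le_mul_riskV (w := w) (z := z) hn hpos i
    have : n * riskV ℓ z w ≤ n * B := by gcongr
    linarith [hanti hcon]
  have hmi : ℓ' (w ⬝ᵥ z i) ≤ ℓ' s₀ := hs₀ ⟨hia, hib.trans (le_max_right _ _)⟩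
  have hdot : gradRiskV ℓ' z w ⬝ᵥ u = -((n : ℝ)⁻¹ * ∑ i, -ℓ' (w ⬝ᵥ z i) * (u ⬝ᵥ z i)) := by
    rw [gradRiskV, smul_dotProduct, sum_dotProduct]
    simp only [smul_dotProduct, smul_eq_mul, dotProduct_comm u]
    simp
  have hsum : -ℓ' s₀ * (u ⬝ᵥ z i₀) ≤ ∑ i, -ℓ' (w ⬝ᵥ z i) * (u ⬝ᵥ z i) := by
    refine le_trans ?_ (Finset.single_le_sum (f := fun i => -ℓ' (w ⬝ᵥ z i) * (u ⬝ᵥ z i))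
      (fun i _ => mul_nonneg (by linarith [hneg (w ⬝ᵥ z i)]) (hsep i).le) (Finset.mem_univ i))
    exact mul_le_mul (by linarith) (hi₀ i) hγ.le (by linarith)
  calc _ ≤ ((n : ℝ)⁻¹ * ∑ i, -ℓ' (w ⬝ᵥ z i) * (u ⬝ᵥ z i)) ^ 2 := by gcongr
    _ = (gradRiskV ℓ' z w ⬝ᵥ u) ^ 2 := by rw [hdot, neg_sq]
    _ ≤ (∑ j, gradRiskV ℓ' z w j ^ 2) * ∑ j, u j ^ 2 := Finset.sum_mul_sq_le_sq_mul_sq _ _ _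
    _ = _ := by rw [hu, mul_one]

end Risk

/-! ### The dissipation argument -/

/-- A nonnegative energy `R` dissipating at rate at least `g²` cannot persist when `g² q ≥ a² > 0`
and `q` moves at speed at most `2 g √q`: the product `q exp (2R/a)` is nonincreasing, so `q` is
bounded, so `g²` is bounded below and `R` becomes negative. Here `G` stands for `g²`. -/
lemma false_of_dissipation {R R' q p G : ℝ → ℝ} {t₀ a : ℝ} (ha : 0 < a)
    (hR : ∀ t, t₀ ≤ t → HasDerivAt R (R' t) t) (hR' : ∀ t, t₀ ≤ t → R' t ≤ -G t)
    (hR0 : ∀ t, t₀ ≤ t → 0 ≤ R t)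
    (hq : ∀ t, t₀ ≤ t → HasDerivAt q (-2 * p t) t) (hp : ∀ t, t₀ ≤ t → p t ^ 2 ≤ q t * G t)
    (hq0 : ∀ t, t₀ ≤ t → 0 ≤ q t)
    (hGq : ∀ t, t₀ ≤ t → a ^ 2 ≤ G t * q t) : False := by
  have hpa : ∀ t, t₀ ≤ t → -p t * a ≤ q t * G t := fun t ht => by
    have h1 := hp t ht
    have h2 := hGq t ht
    have h0 : 0 ≤ q t * G t := (sq_nonneg _).trans h1
    refine abs_le_of_sq_le_sq' ?_ h0 |>.2
    calc (-p t * a) ^ 2 = p t ^ 2 * a ^ 2 := by ring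
      _ ≤ (q t * G t) * (G t * q t) := mul_le_mul h1 h2 (sq_nonneg _) h0
      _ = _ := by ring
  have hmono : AntitoneOn (fun t => q t * Real.exp (2 / a * R t)) (Set.Ici t₀) := by
    refine antitoneOn_Ici_of_hasDerivAt
      (fun t ht => (hq t ht).mul ((hR t ht).const_mul (2 / a)).exp) fun t ht => ?_
    have h1 : q t * (2 / a * R' t) ≤ q t * (2 / a * -G t) :=
      mul_le_mul_of_nonneg_left
        (mul_le_mul_of_nonneg_left (hR' t ht) (by positivity)) (hq0 t ht)
    have h2 : -2 * p t ≤ q t * (2 / a * G t) := by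
      have : q t * (2 / a * G t) = 2 * (q t * G t) / a := by ring
      rw [this, le_div_iff₀ ha]
      linarith [hpa t ht]
    have h3 : -2 * p t + q t * (2 / a * R' t) ≤ 0 := by linarith
    calc _ = (-2 * p t + q t * (2 / a * R' t)) * Real.exp (2 / a * R t) := by ring
      _ ≤ 0 := mul_nonpos_of_nonpos_of_nonneg h3 (Real.exp_pos _).le
  set K := q t₀ * Real.exp (2 / a * R t₀) with hK
  have hqK : ∀ t, t₀ ≤ t → q t ≤ K := fun t ht => by
    refine le_trans ?_ (hmono Set.self_mem_Ici ht ht)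
    refine le_mul_of_one_le_right (hq0 t ht) (Real.one_le_exp ?_)
    have := hR0 t ht
    positivity
  have hqpos : ∀ t, t₀ ≤ t → 0 < q t := fun t ht => by
    refine (hq0 t ht).lt_of_ne' fun h => ?_
    have := hGq t ht
    rw [h, mul_zero] at this
    nlinarith
  have hKpos : 0 < K := (hqpos t₀ le_rfl).trans_le (hqK t₀ le_rfl)
  have hG : ∀ t, t₀ ≤ t → a ^ 2 / K ≤ G t := fun t ht => by
    have h0 : 0 ≤ G t := by
      by_contra! hcon
      nlinarith [hGq t ht, hqpos t ht]
    rw [div_le_iff₀ hKpos]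
    exact (hGq t ht).trans (mul_le_mul_of_nonneg_left (hqK t ht) h0)
  have hdec : AntitoneOn (fun t => R t + a ^ 2 / K * t) (Set.Ici t₀) :=
    antitoneOn_Ici_of_hasDerivAt
      (fun t ht => (hR t ht).add ((hasDerivAt_id' t).const_mul (a ^ 2 / K)))
      fun t ht => by linarith [hR' t ht, hG t ht]
  have hb : 0 < a ^ 2 / K := by positivity
  have hs : 0 ≤ (R t₀ + 1) / (a ^ 2 / K) := by
    have := hR0 t₀ le_rfl
    positivity
  have hle : t₀ ≤ t₀ + (R t₀ + 1) / (a ^ 2 / K) := by linarith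
  have h1 := hdec Set.self_mem_Ici hle hle
  have h2 := hR0 _ hle
  have h3 : a ^ 2 / K * ((R t₀ + 1) / (a ^ 2 / K)) = R t₀ + 1 := mul_div_cancel₀ _ hb.ne'
  simp only [mul_add] at h1
  linarith

theorem stmt5
    (dim : ℕ → ℕ) (L n : ℕ) (hL : 1 ≤ L) (hdimL : dim L = 1) (hn : 0 < n)
    (x : Fin n → Fin (dim 0) → ℝ) (y : Fin n → ℝ) (z : Fin n → Fin (dim 0) → ℝ)
    (hx : ∀ i, vecNorm (x i) ≤ 1) (hy : ∀ i, y i = 1 ∨ y i = -1)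
    (hz : ∀ i, z i = y i • x i)
    (usep : Fin (dim 0) → ℝ) (husep_unit : vecNorm usep = 1)
    (husep : ∀ i, 0 < usep ⬝ᵥ z i)
    (ℓ ℓ' : ℝ → ℝ) (hderiv : ∀ s : ℝ, HasDerivAt ℓ (ℓ' s) s) (hcont : Continuous ℓ')
    (hneg : ∀ s : ℝ, ℓ' s < 0)
    (hbot : Tendsto ℓ atBot atTop) (htop : Tendsto ℓ atTop (nhds 0))
    (W : ℝ → Layers dim) (hflow : IsGradientFlow L ℓ' z W)
    (hinit_grad : ∃ k < L, gradLayer L ℓ' z (W 0) k ≠ 0)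
    (hinit_risk : riskW L ℓ z (W 0) ≤ ℓ 0)
    :
    Tendsto (fun t : ℝ => riskW L ℓ z (W t)) atTop (nhds 0)
    ∧ ∀ k < L, Tendsto (fun t : ℝ => frobNorm (W t k)) atTop atTop := by
  have hanti := loss_strictAnti hderiv hneg
  have hpos := loss_pos hanti htop
  have hn' : (0 : ℝ) < n := by positivity
  have hu : ∑ j, usep j ^ 2 = 1 := Real.sqrt_eq_one.mp husep_unit
  have hz1 : ∀ i, ∑ j, z i j ^ 2 ≤ 1 := fun i => by
    have h1 : ∑ j, x i j ^ 2 ≤ 1 := Real.sqrt_le_one.mp (hx i)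
    have hy2 : y i ^ 2 = 1 := by rcases hy i with h | h <;> simp [h]
    simpa [hz i, mul_pow, hy2] using h1
  have hRder := fun t (ht : 0 ≤ t) => hasDerivAt_riskW (ℓ := ℓ) hderiv hflow ht
  have hRpos : ∀ t, 0 < riskW L ℓ z (W t) := fun t => by
    have h := loss_le_mul_riskV (w := wprod L (W t)) (z := z) hn hpos ⟨0, hn⟩
    exact pos_of_mul_pos_right ((hpos _).trans_le h) hn'.le
  have hRanti : AntitoneOn (fun t => riskW L ℓ z (W t)) (Set.Ici 0) :=
    antitoneOn_Ici_of_hasDerivAt hRder fun t _ =>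
      neg_nonpos.mpr (Finset.sum_nonneg fun k _ => fsq_nonneg _)
  -- The nonzero initial gradient makes the risk drop strictly below `ℓ 0`.
  obtain ⟨t₀, ht₀, hRt₀⟩ : ∃ t₀, 0 < t₀ ∧ riskW L ℓ z (W t₀) < ℓ 0 := by
    obtain ⟨k, hk, hne⟩ := hinit_grad
    have hder := hRder 0 le_rfl
    have hlt : -∑ k ∈ Finset.range L, fsq (gradLayer L ℓ' z (W 0) k) < 0 := by
      rw [neg_lt_zero]
      refine Finset.sum_pos' (fun k _ => fsq_nonneg _) ⟨k, Finset.mem_range.mpr hk, ?_⟩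
      refine (fsq_nonneg _).lt_of_ne' fun h0 => hne ?_
      ext i j
      rw [fsq, Finset.sum_eq_zero_iff_of_nonneg (fun _ _ => by positivity)] at h0
      have h1 := h0 i (Finset.mem_univ i)
      rw [Finset.sum_eq_zero_iff_of_nonneg (fun _ _ => by positivity)] at h1
      simpa using h1 j (Finset.mem_univ j)
    by_contra! hcon
    have hcon' : ∀ t, 0 < t → riskW L ℓ z (W 0) ≤ riskW L ℓ z (W t) := fun t ht =>
      hinit_risk.trans (hcon t ht)
    have hslope := (hasDerivWithinAt_iff_tendsto_slope' (s := Set.Ioi (0 : ℝ)) (by simp)).mp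
      hder.hasDerivWithinAt
    have := ge_of_tendsto hslope (eventually_mem_nhdsWithin.mono fun t ht => by
      have ht : 0 < t := ht
      rw [slope_def_field]
      exact div_nonneg (by linarith [hcon' t ht]) (by linarith))
    linarith
  have hlim : Tendsto (fun t : ℝ => riskW L ℓ z (W t)) atTop (nhds 0) := by
    -- By monotonicity, if the risk does not converge to zero then it stays above some `ε > 0`.
    by_contra hnot
    obtain ⟨ε, hε, hRε⟩ : ∃ ε > 0, ∀ t, 0 ≤ t → ε ≤ riskW L ℓ z (W t) := by
      by_contra! hcon
      refine hnot (tendsto_order.mpr ⟨fun b hb => Eventually.of_forall fun t => hb.trans (hRpos t),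
        fun b hb => ?_⟩)
      obtain ⟨t, ht, htb⟩ := hcon b hb
      filter_upwards [eventually_ge_atTop t] with s hs
      exact (hRanti ht (ht.trans hs) hs).trans_lt htb
    obtain ⟨c, hc, hgrad⟩ := exists_gradRiskV_lower_bound (B := ℓ 0) hn hu husep hcont hneg hanti
      hpos hbot htop hε
    obtain ⟨s₀, hs₀, hℓs₀⟩ : ∃ s₀ > 0, riskW L ℓ z (W t₀) < ℓ s₀ := by
      have h1 : ∀ᶠ s in nhds (0 : ℝ), riskW L ℓ z (W t₀) < ℓ s :=
        (hderiv 0).continuousAt.eventually (lt_mem_nhds hRt₀)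
      have h2 : ∀ᶠ s in nhdsWithin (0 : ℝ) (Set.Ioi 0), riskW L ℓ z (W t₀) < ℓ s :=
        h1.filter_mono nhdsWithin_le_nhds
      obtain ⟨s, hs, hs'⟩ := (h2.and self_mem_nhdsWithin).exists
      exact ⟨s, hs', hs⟩
    have hprod : ∀ t, t₀ ≤ t → s₀ ^ 2 ≤ fsq (prodUpTo (W t) L) := fun t ht => by
      obtain ⟨i, hi⟩ := exists_loss_le_of_riskV_le hn
        (hRanti ht₀.le (ht₀.le.trans ht : (0 : ℝ) ≤ t) ht)
      have hsi : s₀ ≤ wprod L (W t) ⬝ᵥ z i := by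
        by_contra! hcon
        linarith [hanti hcon]
      exact le_trans (by gcongr) (margin_sq_le hdimL (W t) (hz1 i))
    have hnn : ∀ {t}, t₀ ≤ t → 0 ≤ t := fun ht => ht₀.le.trans ht
    refine false_of_dissipation (t₀ := t₀) (a := √c * s₀)
      (G := fun t => fsq (gradLayer L ℓ' z (W t) 0)) (by positivity)
      (fun t ht => hRder t (hnn ht)) (fun t ht => ?_) (fun t _ => (hRpos t).le)
      (fun t ht => hasDerivAt_fsq hflow (hnn ht) (k := 0) hL) (fun t _ => ip_sq_le _ _)
      (fun t _ => fsq_nonneg _) (fun t ht => ?_)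
    · exact neg_le_neg (Finset.single_le_sum (f := fun k => fsq (gradLayer L ℓ' z (W t) k))
        (fun k _ => fsq_nonneg _) (Finset.mem_range.mpr hL))
    · rw [mul_pow, Real.sq_sqrt hc.le]
      refine gradLayer_zero_mul_ge hL hdimL ℓ' z (W t) (hgrad _ (hRε t (hnn ht)) ?_)
        (hprod t ht) (sq_nonneg _)
      exact (hRanti ht₀.le (hnn ht : (0 : ℝ) ≤ t) ht).trans hRt₀.le
  refine ⟨hlim, fun k hk => ?_⟩
  have hmargin : Tendsto (fun t => wprod L (W t) ⬝ᵥ z ⟨0, hn⟩) atTop atTop := by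
    refine tendsto_atTop.mpr fun M => ?_
    filter_upwards [hlim.eventually (gt_mem_nhds (div_pos (hpos M) hn'))] with t ht
    by_contra! hcon
    have h1 := loss_le_mul_riskV (w := wprod L (W t)) (z := z) hn hpos ⟨0, hn⟩
    have h2 : riskV ℓ z (wprod L (W t)) * n < ℓ M := (lt_div_iff₀ hn').mp ht
    linarith [hanti hcon]
  simp only [frobNorm_eq]
  refine Real.tendsto_sqrt_atTop.comp (tendsto_atTop.mpr fun B => ?_)
  -- All squared layer norms differ from that of layer `k` by at most `C`, uniformly in time.
  set C := ∑ j ∈ Finset.range L, |fsq (W 0 j) - fsq (W 0 k)| with hC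
  set K := fsq (1 : Matrix (Fin (dim 0)) (Fin (dim 0)) ℝ) * (B + C) ^ L with hK
  filter_upwards [hmargin.eventually (eventually_gt_atTop (max 1 K)), eventually_ge_atTop 0]
    with t ht ht0
  by_contra! hcon
  have h1 := margin_sq_le hdimL (W t) (hz1 ⟨0, hn⟩)
  have h2 : ∏ j ∈ Finset.range L, fsq (W t j) ≤ (B + C) ^ L := by
    refine (Finset.prod_le_prod (g := fun _ => B + C) (fun j _ => fsq_nonneg _)
      fun j hj => ?_).trans (by simp)
    have h3 := fsq_sub_le hflow ht0 (Finset.mem_range.mp hj) hk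
    have h4 := Finset.single_le_sum (f := fun j => |fsq (W 0 j) - fsq (W 0 k)|)
      (fun j _ => abs_nonneg _) hj
    have h5 := le_abs_self (fsq (W 0 j) - fsq (W 0 k))
    simp only [← hC] at h4
    linarith
  have h3 : fsq (prodUpTo (W t) L) ≤ K :=
    (fsq_prodUpTo_le (W t) L).trans (mul_le_mul_of_nonneg_left h2 (fsq_nonneg _))
  have h4 := (le_max_left 1 K).trans_lt ht
  have h5 := (le_max_right 1 K).trans_lt ht
  nlinarith

end
end
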